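/- Let r ≥ 2 be an integer and let F ∈ ℂ[X,Y] be an irreducible polynomial. Let f : ℂ² → ℂ² be either f(x,y) = (x^r, y^r) or f(x,y) = (−x^r, −y^r), and suppose that for every (x,y) ∈ (ℂ∖{0})² with F(x,y) = 0 one has F(f(x,y)) = 0. Then either F is a scalar multiple of X or of Y (equivalently, the zero set of F does not meet (ℂ∖{0})²), or there exist coprime integers m, n (not both zero) and a root of unity ν such that {(x,y) ∈ (ℂ∖{0})² : F(x,y) = 0} = {(x,y) ∈ (ℂ∖{0})² : x^m y^n = ν}. -/

import Mathlib

open MvPolynomial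

/-!
Let `T = σ → Kˣ` be the torus acting on polynomials by rescaling the variables, and suppose that
`x ↦ a * x ^ r` maps the zeros of an irreducible `F` in `T` to zeros of `F`. Unless `F` is a
variable up to a scalar, the Nullstellensatz applied to the iterates of this map shows that `F`
divides `G(X) = F(c X ^ N)` for some `c`, for each `N = r ^ k`. As `G` is fixed by rescaling with
`N`-th roots of unity, it is divisible by each such rescaling of `F`; these are irreducible of
degree `deg F`, while `deg G = N * deg F`, so they form at most `N` classes up to units. In every
two-dimensional subtorus there are `N ^ 2` rescalings by `N`-th roots of unity, so at least `N` of
them fix the class of `F`, and the stabilizer of that class is infinite there.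

Three non-collinear exponents of `F` would make this stabilizer finite in some two-dimensional
subtorus. So all exponents of `F` lie on a line, with primitive direction `m` say, the kernel of
the character `x ^ m` preserves the zeros of `F`, and these contain a full level set `x ^ m = ν`.
Clearing denominators in `x ^ m - ν` gives a binomial which, by the Nullstellensatz, is divisible
by `F`, so the zeros of `F` are exactly this level set. The invariance now reads
`a ^ m * ν ^ r = ν`, which makes `ν` a root of unity when `a ^ m` is one.
-/

open Finset (univ)
open scoped Pointwise

/-- The exponent vector of a monomial, with integer entries so that two of them can be
subtracted. -/
def expVec {σ : Type*} (s : σ →₀ ℕ) : σ → ℤ := fun i ↦ s i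

section Character

variable {σ G : Type*} [Fintype σ] [CommGroup G]

/-- The character `x ↦ ∏ i, x i ^ m i` of the torus `σ → G` with exponent vector `m`. -/
def torusChar (m : σ → ℤ) : (σ → G) →* G where
  toFun x := ∏ i, x i ^ m i
  map_one' := by simp
  map_mul' x y := by simp [mul_zpow, Finset.prod_mul_distrib]

lemma torusChar_apply (m : σ → ℤ) (x : σ → G) : torusChar m x = ∏ i, x i ^ m i := rfl

lemma torusChar_sub (m n : σ → ℤ) (x : σ → G) :
    torusChar (m - n) x = torusChar m x / torusChar n x := by
  simp [torusChar_apply, zpow_sub, Finset.prod_mul_distrib, div_eq_mul_inv]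

lemma torusChar_zsmul (k : ℤ) (m : σ → ℤ) (x : σ → G) :
    torusChar (k • m) x = torusChar m x ^ k := by
  simp [torusChar_apply, ← Finset.prod_zpow, mul_comm k, zpow_mul]

lemma torusChar_mulSingle [DecidableEq σ] (m : σ → ℤ) (i : σ) (z : G) :
    torusChar m (Pi.mulSingle i z) = z ^ m i := by
  rw [torusChar_apply, Finset.prod_eq_single i] <;> simp +contextual

end Character

lemma zpow_det_eq_one {G : Type*} [CommGroup G] {a b : G} {p q p' q' : ℤ}
    (h : a ^ p * b ^ q = 1) (h' : a ^ p' * b ^ q' = 1) : a ^ (p * q' - q * p') = 1 :=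
  calc a ^ (p * q' - q * p')
      = (a ^ p * b ^ q) ^ q' / (a ^ p' * b ^ q') ^ q := by
        rw [mul_zpow, mul_zpow, ← zpow_mul, ← zpow_mul, ← zpow_mul, ← zpow_mul, mul_comm q' q,
          mul_div_mul_right_eq_div, zpow_sub, mul_comm p' q, div_eq_mul_inv]
    _ = 1 := by rw [h, h', one_zpow, one_zpow, div_one]

lemma finite_setOf_zpow_mul_zpow_eq_one {R : Type*} [CommRing R] [IsDomain R] {p q p' q' : ℤ}
    (hdet : p * q' - q * p' ≠ 0) :
    {z : Rˣ × Rˣ | z.1 ^ p * z.2 ^ q = 1 ∧ z.1 ^ p' * z.2 ^ q' = 1}.Finite := by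
  set D := p * q' - q * p' with hD
  have : NeZero D.natAbs := ⟨Int.natAbs_ne_zero.2 hdet⟩
  have hfin : (rootsOfUnity D.natAbs R : Set Rˣ).Finite :=
    inferInstanceAs (Finite (rootsOfUnity D.natAbs R))
  refine (hfin.prod hfin).subset fun z ⟨h, h'⟩ ↦ ⟨?_, ?_⟩
  · exact pow_natAbs_eq_one.2 (zpow_det_eq_one h h')
  · have hz : z.2 ^ (-D) = 1 := by
      rw [hD, neg_sub]
      exact zpow_det_eq_one ((mul_comm _ _).trans h) ((mul_comm _ _).trans h')
    exact pow_natAbs_eq_one.2 (inv_eq_one.1 ((zpow_neg _ _).symm.trans hz))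

lemma exists_gcd_eq_one_and_zsmul {σ : Type*} [Fintype σ] {v : σ → ℤ} (hv : v ≠ 0) :
    ∃ m : σ → ℤ, univ.gcd m = 1 ∧
      ∀ w : σ → ℤ, (∀ i j, v i * w j = v j * w i) → ∃ k : ℤ, w = k • m := by
  obtain ⟨i₀, hi₀⟩ := Function.ne_iff.1 hv
  obtain ⟨m, hvm, hm⟩ := Finset.extract_gcd v ⟨i₀, Finset.mem_univ i₀⟩
  obtain ⟨c, hc⟩ := Finset.gcd_eq_sum_mul univ m
  have hd : univ.gcd v ≠ 0 := fun h ↦ hi₀ (Finset.gcd_eq_zero_iff.1 h i₀ (Finset.mem_univ i₀))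
  refine ⟨m, hm, fun w hw ↦ ⟨∑ i, c i * w i, funext fun j ↦ ?_⟩⟩
  have hmw (i : σ) : m i * w j = m j * w i := by
    have := hw i j
    rw [hvm i (Finset.mem_univ i), hvm j (Finset.mem_univ j), mul_assoc, mul_assoc] at this
    exact mul_left_cancel₀ hd this
  calc w j = (∑ i, m i * c i) * w j := by rw [← hc, hm, one_mul]
    _ = ∑ i, c i * w i * m j := by
      rw [Finset.sum_mul]
      exact Finset.sum_congr rfl fun i _ ↦ by linear_combination c i * hmw i
    _ = ((∑ i, c i * w i) • m) j := by rw [Pi.smul_apply, smul_eq_mul, Finset.sum_mul]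

section Scale

variable {σ R : Type*} [CommSemiring R]

/-- The action of the torus on polynomials by rescaling the variables, `X i ↦ g i * X i`. -/
noncomputable def torusScale : (σ → Rˣ) →* (MvPolynomial σ R ≃ₐ[R] MvPolynomial σ R) where
  toFun g := AlgEquiv.ofAlgHom (aeval fun i ↦ C (g i : R) * X i)
    (aeval fun i ↦ C (↑(g i)⁻¹ : R) * X i)
    (by ext i : 1; simp [← mul_assoc, ← C_mul, algebraMap_eq])
    (by ext i : 1; simp [← mul_assoc, ← C_mul, algebraMap_eq])
  map_one' := by ext p : 1; simp
  map_mul' g h := by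
    refine AlgEquiv.coe_toAlgHom_injective (algHom_ext fun i ↦ ?_)
    simp only [Pi.mul_apply, Units.val_mul, aeval_eq_bind₁, AlgEquiv.coe_toAlgHom,
      AlgEquiv.ofAlgHom_apply, bind₁_X_right, AlgEquiv.mul_apply, map_mul, algHom_C, algebraMap_eq]
    ring

lemma torusScale_apply (g : σ → Rˣ) (F : MvPolynomial σ R) :
    torusScale g F = aeval (fun i ↦ C (g i : R) * X i) F := rfl

lemma torusScale_expand {N : ℕ} {g : σ → Rˣ} (hg : g ^ N = 1) (F : MvPolynomial σ R) :
    torusScale g (expand N F) = expand N F := by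
  have hX : (fun i ↦ C (g i : R) * X i : σ → MvPolynomial σ R) ^ N = X ^ N := by
    ext1 i
    have hgi : (g i : R) ^ N = 1 := by
      rw [← Units.val_pow_eq_pow_val, ← Pi.pow_apply, hg, Pi.one_apply, Units.val_one]
    rw [Pi.pow_apply, Pi.pow_apply, mul_pow, ← C_pow, hgi, C_1, one_mul]
  rw [torusScale_apply, aeval_expand, hX]
  rfl

lemma irreducible_torusScale {g : σ → Rˣ} {F : MvPolynomial σ R} :
    Irreducible (torusScale g F) ↔ Irreducible F :=
  MulEquiv.irreducible_iff (torusScale g)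

lemma torusScale_monomial [Fintype σ] (g : σ → Rˣ) (s : σ →₀ ℕ) (c : R) :
    torusScale g (monomial s c) = monomial s (↑(torusChar (expVec s) g) * c) := by
  have hprod (p : σ → MvPolynomial σ R) : (s.prod fun i k ↦ p i ^ k) = ∏ i, p i ^ s i :=
    Finsupp.prod_fintype _ _ fun i ↦ pow_zero _
  rw [torusScale_apply, aeval_monomial, monomial_eq, hprod, hprod]
  simp only [algebraMap_eq, mul_pow, Finset.prod_mul_distrib, torusChar_apply, expVec,
    zpow_natCast, Units.coe_prod, Units.val_pow_eq_pow_val, C_mul, map_prod, C_pow]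
  ring

lemma coeff_torusScale [Fintype σ] (g : σ → Rˣ) (F : MvPolynomial σ R) (s : σ →₀ ℕ) :
    coeff s (torusScale g F) = ↑(torusChar (expVec s) g) * coeff s F := by
  classical
  induction F using MvPolynomial.induction_on' with
  | monomial t c =>
    rw [torusScale_monomial, coeff_monomial, coeff_monomial]
    split_ifs with h
    · rw [h]
    · rw [mul_zero]
  | add p q hp hq => rw [map_add, coeff_add, coeff_add, hp, hq, mul_add]

lemma totalDegree_torusScale [Finite σ] (g : σ → Rˣ) (F : MvPolynomial σ R) :
    (torusScale g F).totalDegree = F.totalDegree := by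
  cases nonempty_fintype σ
  have hsupp : (torusScale g F).support = F.support := by
    ext s
    simp [mem_support_iff, coeff_torusScale]
  rw [totalDegree, totalDegree, hsupp]

end Scale

section Zeros

variable {σ R : Type*} [CommSemiring R]

/-- The zero set of a polynomial in the torus, that is, its zeros with invertible coordinates. -/
def torusZeros (F : MvPolynomial σ R) : Set (σ → Rˣ) := {x | eval (fun i ↦ (x i : R)) F = 0}

lemma mem_torusZeros {F : MvPolynomial σ R} {x : σ → Rˣ} :
    x ∈ torusZeros F ↔ eval (fun i ↦ (x i : R)) F = 0 := Iff.rfl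

lemma mem_torusZeros_torusScale {g x : σ → Rˣ} {F : MvPolynomial σ R} :
    x ∈ torusZeros (torusScale g F) ↔ g * x ∈ torusZeros F := by
  rw [mem_torusZeros, mem_torusZeros, torusScale_apply, ← coe_aeval_eq_eval, RingHom.coe_coe,
    comp_aeval_apply]
  simp

lemma mem_torusZeros_expand {N : ℕ} {x : σ → Rˣ} {F : MvPolynomial σ R} :
    x ∈ torusZeros (expand N F) ↔ x ^ N ∈ torusZeros F := by
  rw [mem_torusZeros, eval_expand]
  rfl

lemma torusZeros_subset_of_dvd {F G : MvPolynomial σ R} (h : F ∣ G) :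
    torusZeros F ⊆ torusZeros G := by
  obtain ⟨H, rfl⟩ := h
  intro x hx
  rw [mem_torusZeros] at hx ⊢
  rw [map_mul, hx, zero_mul]

end Zeros

section Stabilizer

variable {σ R : Type*} [CommRing R] [IsDomain R]

/-- The subgroup of the torus whose elements rescale `F` to an associate of `F`. -/
noncomputable def torusStabilizer (F : MvPolynomial σ R) : Subgroup (σ → Rˣ) :=
  (MulAction.stabilizer (MvPolynomial σ R ≃ₐ[R] MvPolynomial σ R) (Ideal.span {F})).comap torusScale

lemma mem_torusStabilizer {g : σ → Rˣ} {F : MvPolynomial σ R} :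
    g ∈ torusStabilizer F ↔ Associated (torusScale g F) F := by
  rw [torusStabilizer, Subgroup.mem_comap, MulAction.mem_stabilizer_iff, Ideal.smul_closure,
    Set.smul_set_singleton, Ideal.span_singleton_eq_span_singleton]
  rfl

lemma mem_torusStabilizer_iff_exists {g : σ → Rˣ} {F : MvPolynomial σ R} :
    g ∈ torusStabilizer F ↔ ∃ c : Rˣ, torusScale g F = C (c : R) * F := by
  rw [mem_torusStabilizer]
  constructor
  · intro h
    obtain ⟨u, hu⟩ := h.symm
    obtain ⟨_, ⟨c, rfl⟩, hc⟩ := isUnit_iff_eq_C_of_isReduced.1 u.isUnit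
    exact ⟨c, by rw [← hu, hc, mul_comm]⟩
  · rintro ⟨c, hc⟩
    rw [hc]
    exact associated_unit_mul_left F _ (c.isUnit.map C)

lemma inv_mul_mem_torusStabilizer {g h : σ → Rˣ} {F : MvPolynomial σ R}
    (hgh : Associated (torusScale g F) (torusScale h F)) : g⁻¹ * h ∈ torusStabilizer F := by
  rw [mem_torusStabilizer, map_mul, AlgEquiv.mul_apply]
  refine (hgh.symm.map (torusScale g⁻¹)).trans ?_
  rw [← AlgEquiv.mul_apply, ← map_mul, inv_mul_cancel, map_one, AlgEquiv.one_apply]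

lemma mul_mem_torusZeros {F : MvPolynomial σ R} {g x : σ → Rˣ} (hg : g ∈ torusStabilizer F)
    (hx : x ∈ torusZeros F) : g * x ∈ torusZeros F := by
  obtain ⟨c, hc⟩ := mem_torusStabilizer_iff_exists.1 hg
  rw [← mem_torusZeros_torusScale, hc]
  exact torusZeros_subset_of_dvd (dvd_mul_left F _) hx

lemma mem_torusStabilizer_iff_torusChar_eq [Fintype σ] {F : MvPolynomial σ R} {g : σ → Rˣ}
    {s : σ →₀ ℕ} (hs : s ∈ F.support) :
    g ∈ torusStabilizer F ↔ ∀ t ∈ F.support, torusChar (expVec t) g = torusChar (expVec s) g := by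
  rw [mem_torusStabilizer_iff_exists]
  constructor
  · rintro ⟨c, hc⟩
    have hchar {t : σ →₀ ℕ} (ht : t ∈ F.support) : torusChar (expVec t) g = c := by
      have := congrArg (coeff t) hc
      rw [coeff_torusScale, coeff_C_mul] at this
      exact Units.ext (mul_right_cancel₀ (mem_support_iff.1 ht) this)
    exact fun t ht ↦ (hchar ht).trans (hchar hs).symm
  · refine fun h ↦ ⟨torusChar (expVec s) g, ?_⟩
    ext t
    rw [coeff_torusScale, coeff_C_mul]
    by_cases ht : t ∈ F.support
    · rw [h t ht]
    · rw [notMem_support_iff.1 ht, mul_zero, mul_zero]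

end Stabilizer

section Degree

variable {σ R : Type*} [CommRing R] [IsDomain R]

lemma totalDegree_prod_of_forall_ne_zero {ι : Type*} {t : Finset ι} {p : ι → MvPolynomial σ R}
    (hp : ∀ i ∈ t, p i ≠ 0) : (∏ i ∈ t, p i).totalDegree = ∑ i ∈ t, (p i).totalDegree := by
  classical
  induction t using Finset.induction_on with
  | empty => simp
  | insert i t hi ih =>
    have ht : ∀ j ∈ t, p j ≠ 0 := fun j hj ↦ hp j (Finset.mem_insert_of_mem hj)
    rw [Finset.prod_insert hi, Finset.sum_insert hi, totalDegree_mul_of_isDomain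
      (hp i (Finset.mem_insert_self i t)) (Finset.prod_ne_zero_iff.2 ht), ih ht]

lemma sum_totalDegree_le_of_pairwise_isRelPrime [UniqueFactorizationMonoid R] {ι : Type*}
    {t : Finset ι} {p : ι → MvPolynomial σ R} {Q : MvPolynomial σ R} (hQ : Q ≠ 0)
    (hp : (t : Set ι).Pairwise (IsRelPrime.onFun p)) (hdvd : ∀ i ∈ t, p i ∣ Q) :
    ∑ i ∈ t, (p i).totalDegree ≤ Q.totalDegree := by
  rw [← totalDegree_prod_of_forall_ne_zero fun i hi ↦ ne_zero_of_dvd_ne_zero hQ (hdvd i hi)]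
  exact totalDegree_le_of_dvd_of_isDomain (Finset.prod_dvd_of_isRelPrime hp hdvd) hQ

end Degree

section Field

variable {σ K : Type*} [Field K]

lemma totalDegree_pos_of_irreducible {F : MvPolynomial σ K} (hF : Irreducible F) :
    0 < F.totalDegree := by
  refine Nat.pos_of_ne_zero fun h ↦ hF.not_isUnit ?_
  rw [totalDegree_eq_zero_iff_eq_C] at h
  refine h ▸ (IsUnit.mk0 _ fun hc ↦ hF.ne_zero ?_).map C
  rw [h, hc, C_0]

lemma relIndex_torusStabilizer_le [Finite σ] {F : MvPolynomial σ K} (hF : Irreducible F) {N : ℕ}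
    (hN : 0 < N) {c : σ → Kˣ} (hdvd : F ∣ expand N (torusScale c F)) {S : Subgroup (σ → Kˣ)}
    [Finite S] (hS : ∀ g ∈ S, g ^ N = 1) : (torusStabilizer F).relIndex S ≤ N := by
  have := Fintype.ofFinite (S ⧸ (torusStabilizer F).subgroupOf S)
  let p (q : S ⧸ (torusStabilizer F).subgroupOf S) : MvPolynomial σ K :=
    torusScale (q.out : σ → Kˣ) F
  have hirr (q) : Irreducible (p q) := irreducible_torusScale.2 hF
  have hrel {q q'} (hqq' : q ≠ q') : IsRelPrime (p q) (p q') := by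
    refine (hirr q).isRelPrime_iff_not_dvd.2 fun h ↦ hqq' ?_
    rw [← q.out_eq, ← q'.out_eq, Quotient.eq, QuotientGroup.leftRel_apply]
    exact inv_mul_mem_torusStabilizer ((hirr q).associated_of_dvd (hirr q') h)
  have hpdvd (q) : p q ∣ expand N (torusScale c F) := by
    rw [← torusScale_expand (hS _ q.out.2)]
    exact map_dvd _ hdvd
  have hQ : expand N (torusScale c F) ≠ 0 :=
    (expand_ne_zero hN).2 (irreducible_torusScale.2 hF).ne_zero
  have hle := sum_totalDegree_le_of_pairwise_isRelPrime (t := univ) hQ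
    (fun q _ q' _ h ↦ hrel h) fun q _ ↦ hpdvd q
  rw [totalDegree_expand] at hle
  simp only [p, totalDegree_torusScale, Finset.sum_const, Finset.card_univ, smul_eq_mul] at hle
  rw [mul_comm] at hle
  rw [Subgroup.relIndex, Subgroup.index, Nat.card_eq_fintype_card]
  exact Nat.le_of_mul_le_mul_left hle (totalDegree_pos_of_irreducible hF)

-- Two dimensions suffice: the `N ^ 2` elements of order dividing `N` beat the index bound `N` of
-- `relIndex_torusStabilizer_le`, whereas in one dimension there are only `N` of them.
lemma infinite_comap_torusStabilizer [Finite σ] [IsAlgClosed K] {F : MvPolynomial σ K}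
    (hF : Irreducible F)
    (h : ∀ B : ℕ, ∃ N > B, (N : K) ≠ 0 ∧ ∃ c : σ → Kˣ, F ∣ expand N (torusScale c F))
    (φ : Kˣ × Kˣ →* (σ → Kˣ)) :
    ((torusStabilizer F).comap φ : Set (Kˣ × Kˣ)).Infinite := by
  set H := (torusStabilizer F).comap φ
  intro hfin
  have : Finite H := hfin
  obtain ⟨N, hN, hNK, c, hdvd⟩ := h (Nat.card H)
  have : NeZero (N : K) := ⟨hNK⟩
  have : NeZero N := .of_neZero_natCast K
  let S := (rootsOfUnity N K).prod (rootsOfUnity N K)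
  let e : S ≃ rootsOfUnity N K × rootsOfUnity N K := (Subgroup.prodEquiv _ _).toEquiv
  have : Finite S := .of_equiv _ e.symm
  have hS : Nat.card S = N * N := by
    rw [Nat.card_congr e, Nat.card_prod, HasEnoughRootsOfUnity.natCard_rootsOfUnity]
  have hindex : H.relIndex S ≤ N := by
    rw [Subgroup.relIndex_comap]
    have : Finite (S.map φ) := Set.Finite.image φ (Set.toFinite (S : Set (Kˣ × Kˣ)))
    refine relIndex_torusStabilizer_le hF (NeZero.pos N) hdvd ?_
    rintro _ ⟨z, ⟨hz₁, hz₂⟩, rfl⟩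
    rw [← map_pow, show z ^ N = 1 from Prod.ext hz₁ hz₂, map_one]
  have : N * N < N * N := calc
    N * N = Nat.card ↥(H ⊓ S) * H.relIndex S := by
      rw [← hS, ← Subgroup.relIndex_bot_left, ← Subgroup.relIndex_bot_left,
        ← Subgroup.inf_relIndex_right H S, Subgroup.relIndex_mul_relIndex _ _ _ bot_le inf_le_right]
    _ ≤ Nat.card H * N := Nat.mul_le_mul (Subgroup.card_le_of_le inf_le_left) hindex
    _ < N * N := Nat.mul_lt_mul_of_pos_right hN (NeZero.pos N)
  exact this.false

lemma det_expVec_sub_eq_zero [Finite σ] {F : MvPolynomial σ K}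
    (h : ∀ φ : Kˣ × Kˣ →* (σ → Kˣ), ((torusStabilizer F).comap φ : Set (Kˣ × Kˣ)).Infinite)
    {s t u : σ →₀ ℕ} (hs : s ∈ F.support) (ht : t ∈ F.support) (hu : u ∈ F.support) (i j : σ) :
    (expVec t - expVec s) i * (expVec u - expVec s) j =
      (expVec t - expVec s) j * (expVec u - expVec s) i := by
  classical
  cases nonempty_fintype σ
  let φ : Kˣ × Kˣ →* (σ → Kˣ) :=
    (MonoidHom.mulSingle (fun _ ↦ Kˣ) i).coprod (MonoidHom.mulSingle (fun _ ↦ Kˣ) j)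
  have hchar {z : Kˣ × Kˣ} (hz : z ∈ (torusStabilizer F).comap φ) {v : σ →₀ ℕ}
      (hv : v ∈ F.support) :
      z.1 ^ (expVec v - expVec s) i * z.2 ^ (expVec v - expVec s) j = 1 := by
    rw [← torusChar_mulSingle, ← torusChar_mulSingle, ← map_mul, torusChar_sub, div_eq_one]
    exact (mem_torusStabilizer_iff_torusChar_eq hs).1 hz v hv
  by_contra hne
  exact h φ <| (finite_setOf_zpow_mul_zpow_eq_one (sub_ne_zero.2 hne)).subset
    fun z hz ↦ ⟨hchar hz ht, hchar hz hu⟩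

lemma exists_eq_C_mul_X_of_dvd {F : MvPolynomial σ K} (hF : Irreducible F) {i : σ}
    (h : F ∣ X i) : ∃ c : K, F = C c * X i := by
  obtain ⟨u, hu⟩ := (hF.associated_of_dvd X_prime.irreducible h).symm
  obtain ⟨c, -, hc⟩ := isUnit_iff_eq_C_of_isReduced.1 u.isUnit
  exact ⟨c, by rw [← hu, hc, mul_comm]⟩

lemma exists_ne_mem_support [Finite σ] {F : MvPolynomial σ K} (hF : Irreducible F)
    (hX : ∀ i, ¬ F ∣ X i) : ∃ s ∈ F.support, ∃ t ∈ F.support, t ≠ s := by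
  cases nonempty_fintype σ
  by_contra! hsub
  obtain ⟨s, hs⟩ := support_nonempty.2 hF.ne_zero
  have hmon : F = monomial s (coeff s F) := by
    have hsupp : F.support = {s} := Finset.eq_singleton_iff_unique_mem.2 ⟨hs, hsub s hs⟩
    conv_lhs => rw [F.as_sum, hsupp, Finset.sum_singleton]
  have hdvd : F ∣ ∏ i, X i ^ s i := by
    rw [hmon, monomial_eq, Finsupp.prod_fintype _ _ fun i ↦ pow_zero _]
    exact (((IsUnit.mk0 _ (mem_support_iff.1 hs)).map C).mul_left_dvd).2 dvd_rfl
  obtain ⟨i, -, hi⟩ := hF.prime.exists_mem_finset_dvd hdvd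
  exact hX i (hF.prime.dvd_of_dvd_pow hi)

lemma exists_ker_torusChar_le_torusStabilizer [Fintype σ] {F : MvPolynomial σ K}
    (hF : Irreducible F) (hX : ∀ i, ¬ F ∣ X i)
    (h : ∀ φ : Kˣ × Kˣ →* (σ → Kˣ), ((torusStabilizer F).comap φ : Set (Kˣ × Kˣ)).Infinite) :
    ∃ m : σ → ℤ, univ.gcd m = 1 ∧ (torusChar m).ker ≤ torusStabilizer F := by
  obtain ⟨s, hs, t, ht, hts⟩ := exists_ne_mem_support hF hX
  have hv : expVec t - expVec s ≠ 0 := fun h ↦ hts <| Finsupp.ext fun i ↦ by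
    simpa [expVec, sub_eq_zero] using congrFun h i
  obtain ⟨m, hm, hcol⟩ := exists_gcd_eq_one_and_zsmul hv
  refine ⟨m, hm, fun g hg ↦ (mem_torusStabilizer_iff_torusChar_eq hs).2 fun u hu ↦ ?_⟩
  obtain ⟨k, hk⟩ := hcol (expVec u - expVec s) (det_expVec_sub_eq_zero h hs ht hu)
  rw [← div_eq_one, ← torusChar_sub, hk, torusChar_zsmul, MonoidHom.mem_ker.1 hg, one_zpow]

lemma exists_irreducible_dvd_mem_torusZeros {G : MvPolynomial σ K} (hG : G ≠ 0) {x : σ → Kˣ}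
    (hx : x ∈ torusZeros G) : ∃ p, Irreducible p ∧ p ∣ G ∧ x ∈ torusZeros p := by
  obtain ⟨S, hS, u, rfl⟩ := WfDvdMonoid.exists_factors G hG
  have hu := (u.isUnit.map (eval fun i ↦ (x i : K))).ne_zero
  rw [mem_torusZeros, map_mul, mul_eq_zero, or_iff_left hu, map_multiset_prod,
    Multiset.prod_eq_zero_iff, Multiset.mem_map] at hx
  obtain ⟨p, hp, hpx⟩ := hx
  exact ⟨p, hS p hp, (Multiset.dvd_prod hp).mul_right _, hpx⟩

section Nullstellensatz

variable [Finite σ] [IsAlgClosed K]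

lemma dvd_of_torusZeros_subset {F H : MvPolynomial σ K} (hF : Irreducible F)
    (hX : ∀ i, ¬ F ∣ X i) (h : torusZeros F ⊆ torusZeros H) : F ∣ H := by
  cases nonempty_fintype σ
  have : (Ideal.span {F}).IsPrime := (Ideal.span_singleton_prime hF.ne_zero).2 hF.prime
  have hmem : (∏ i, X i) * H ∈ vanishingIdeal K (zeroLocus K (Ideal.span {F})) := by
    intro v hv
    have hFv : eval v F = 0 := by
      rw [← coe_aeval_eq_eval]
      exact hv F (Ideal.mem_span_singleton_self F)
    rw [map_mul, map_prod, mul_eq_zero, Finset.prod_eq_zero_iff]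
    refine or_iff_not_imp_left.2 fun hv0 ↦ ?_
    have hv0 (i : σ) : v i ≠ 0 := fun hi ↦ hv0 ⟨i, Finset.mem_univ i, by rw [aeval_X, hi]⟩
    exact h (a := fun i ↦ Units.mk0 (v i) (hv0 i)) hFv
  rw [IsPrime.vanishingIdeal_zeroLocus, Ideal.mem_span_singleton] at hmem
  refine (hF.prime.dvd_or_dvd hmem).resolve_left fun hprod ↦ ?_
  obtain ⟨i, -, hi⟩ := hF.prime.exists_mem_finset_dvd hprod
  exact hX i hi

lemma torusZeros_nonempty {F : MvPolynomial σ K} (hF : Irreducible F) (hX : ∀ i, ¬ F ∣ X i) :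
    (torusZeros F).Nonempty := by
  by_contra! hempty
  refine hF.not_isUnit (isUnit_of_dvd_one (dvd_of_torusZeros_subset hF hX ?_))
  rw [hempty]
  exact Set.empty_subset _

lemma dvd_of_torusZeros_superset {F G : MvPolynomial σ K} (hF : Irreducible F)
    (hne : (torusZeros G).Nonempty) (h : torusZeros G ⊆ torusZeros F) : F ∣ G := by
  obtain rfl | hG := eq_or_ne G 0
  · exact dvd_zero F
  obtain ⟨x, hx⟩ := hne
  obtain ⟨p, hp, hpG, hpx⟩ := exists_irreducible_dvd_mem_torusZeros hG hx
  have hpX (i : σ) : ¬ p ∣ X i := fun hi ↦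
    (x i).ne_zero (by simpa [mem_torusZeros] using torusZeros_subset_of_dvd hi hpx)
  have hpF : p ∣ F := dvd_of_torusZeros_subset hp hpX ((torusZeros_subset_of_dvd hpG).trans h)
  exact (hp.associated_of_dvd hF hpF).symm.dvd.trans hpG

end Nullstellensatz

end Field

section Binomial

variable {σ R : Type*} [Fintype σ] [CommRing R]

/-- The binomial `∏ i, X i ^ m i - ν` with denominators cleared: truncation by `Int.toNat` splits
the exponents into their positive and negative parts. -/
noncomputable def torusBinomial (m : σ → ℤ) (ν : R) : MvPolynomial σ R :=
  ∏ i, X i ^ (m i).toNat - C ν * ∏ i, X i ^ (-m i).toNat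

lemma torusZeros_torusBinomial (m : σ → ℤ) (ν : Rˣ) :
    torusZeros (torusBinomial m (ν : R)) = {x | torusChar m x = ν} := by
  ext x
  have hsplit : ∏ i, x i ^ (m i).toNat = torusChar m x * ∏ i, x i ^ (-m i).toNat := by
    rw [torusChar_apply, ← Finset.prod_mul_distrib]
    refine Finset.prod_congr rfl fun i _ ↦ ?_
    rw [← zpow_natCast, ← zpow_natCast, ← zpow_add]
    congr 1
    omega
  have heval : eval (fun i ↦ (x i : R)) (torusBinomial m (ν : R)) =
      ↑(∏ i, x i ^ (m i).toNat) - ↑(ν * ∏ i, x i ^ (-m i).toNat) := by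
    simp [torusBinomial, map_prod]
  rw [mem_torusZeros, heval, sub_eq_zero, Units.val_inj, hsplit, mul_left_inj]
  rfl

end Binomial

lemma exists_iterate_mul_pow {G : Type*} [CommGroup G] (a : G) (r k : ℕ) :
    ∃ c : G, ∀ x, (fun x ↦ a * x ^ r)^[k] x = c * x ^ r ^ k := by
  induction k with
  | zero => exact ⟨1, fun x ↦ by simp⟩
  | succ k ih =>
    obtain ⟨c, hc⟩ := ih
    refine ⟨a * c ^ r, fun x ↦ ?_⟩
    rw [Function.iterate_succ_apply', hc, mul_pow, ← pow_mul, ← pow_succ, mul_assoc]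

lemma exists_dvd_expand_torusScale {σ K : Type*} [Finite σ] [Field K] [IsAlgClosed K] {r : ℕ}
    {F : MvPolynomial σ K} (hF : Irreducible F) (hX : ∀ i, ¬ F ∣ X i) {a : σ → Kˣ}
    (h : Set.MapsTo (fun x ↦ a * x ^ r) (torusZeros F) (torusZeros F)) (k : ℕ) :
    ∃ c : σ → Kˣ, F ∣ expand (r ^ k) (torusScale c F) := by
  obtain ⟨c, hc⟩ := exists_iterate_mul_pow a r k
  refine ⟨c, dvd_of_torusZeros_subset hF hX fun x hx ↦ ?_⟩
  rw [mem_torusZeros_expand, mem_torusZeros_torusScale, ← hc]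
  exact h.iterate k hx

theorem exists_torusZeros_eq_setOf_torusChar_eq {σ K : Type*} [Fintype σ] [Field K]
    [IsAlgClosed K] {r : ℕ} (hr : 2 ≤ r) (hrK : (r : K) ≠ 0) {F : MvPolynomial σ K}
    (hF : Irreducible F) {a : σ → Kˣ}
    (h : Set.MapsTo (fun x ↦ a * x ^ r) (torusZeros F) (torusZeros F)) :
    (∃ i, ∃ c : K, F = C c * X i) ∨
      ∃ (m : σ → ℤ) (ν : Kˣ), univ.gcd m = 1 ∧ torusChar m a * ν ^ r = ν ∧
        torusZeros F = {x | torusChar m x = ν} := by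
  refine or_iff_not_imp_left.2 fun hmon ↦ ?_
  have hX (i : σ) : ¬ F ∣ X i := fun hi ↦ hmon ⟨i, exists_eq_C_mul_X_of_dvd hF hi⟩
  have hinf := infinite_comap_torusStabilizer hF fun B ↦ ⟨r ^ B, Nat.lt_pow_self hr,
    by rw [Nat.cast_pow]; exact pow_ne_zero B hrK, exists_dvd_expand_torusScale hF hX h B⟩
  obtain ⟨m, hm, hker⟩ := exists_ker_torusChar_le_torusStabilizer hF hX hinf
  obtain ⟨x₀, hx₀⟩ := torusZeros_nonempty hF hX
  have hsub : {x | torusChar m x = torusChar m x₀} ⊆ torusZeros F := fun x hx ↦ by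
    have hmem : x / x₀ ∈ torusStabilizer F := hker <| by
      rw [MonoidHom.mem_ker, map_div, hx, div_self']
    simpa using mul_mem_torusZeros hmem hx₀
  rw [← torusZeros_torusBinomial] at hsub
  have hdvd : F ∣ torusBinomial m ((torusChar m x₀ : Kˣ) : K) :=
    dvd_of_torusZeros_superset hF ⟨x₀, by rw [torusZeros_torusBinomial]; rfl⟩ hsub
  have heq : torusZeros F = {x | torusChar m x = torusChar m x₀} := by
    rw [← torusZeros_torusBinomial]
    exact (torusZeros_subset_of_dvd hdvd).antisymm hsub
  have hax₀ : torusChar m (a * x₀ ^ r) = torusChar m x₀ := heq.subset (h hx₀)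
  exact ⟨m, torusChar m x₀, hm, by rw [← map_pow, ← map_mul, hax₀], heq⟩

lemma isOfFinOrder_of_mul_pow_eq {G : Type*} [CommGroup G] {a x : G} {r : ℕ} (hr : 2 ≤ r)
    (ha : IsOfFinOrder a) (h : a * x ^ r = x) : IsOfFinOrder x := by
  obtain ⟨k, rfl⟩ := Nat.exists_eq_add_of_le' (one_le_two.trans hr)
  have hk : x ^ k = a⁻¹ := eq_inv_of_mul_eq_one_right <| by
    rwa [pow_succ, ← mul_assoc, mul_eq_right] at h
  exact (isOfFinOrder_pow.1 (hk ▸ ha.inv)).resolve_right (by omega)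

lemma eval_eq_zero_iff_mem_torusZeros {R : Type*} [CommSemiring R]
    {F : MvPolynomial (Fin 2) R} (x y : Rˣ) :
    eval ![(x : R), (y : R)] F = 0 ↔ ![x, y] ∈ torusZeros F := by
  rw [mem_torusZeros]
  congr! with i
  fin_cases i <;> rfl

theorem stmt8_general {K : Type*} [Field K] [IsAlgClosed K] {r : ℕ} (hr : 2 ≤ r)
    (hrK : (r : K) ≠ 0) {F : MvPolynomial (Fin 2) K} (hF : Irreducible F) {a b : K}
    (ha : IsOfFinOrder a) (hb : IsOfFinOrder b) {f : K × K → K × K}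
    (hf : ∀ p, f p = (a * p.1 ^ r, b * p.2 ^ r))
    (hinv : ∀ x y : K, x ≠ 0 → y ≠ 0 → eval ![x, y] F = 0 →
      eval ![(f (x, y)).1, (f (x, y)).2] F = 0) :
    (∃ c : K, F = C c * X 0) ∨ (∃ c : K, F = C c * X 1) ∨
      ∃ (m n : ℤ) (ν : K), Int.gcd m n = 1 ∧ (∃ k : ℕ, 0 < k ∧ ν ^ k = 1) ∧
        {p : K × K | p.1 ≠ 0 ∧ p.2 ≠ 0 ∧ eval ![p.1, p.2] F = 0} =
          {p : K × K | p.1 ≠ 0 ∧ p.2 ≠ 0 ∧ p.1 ^ m * p.2 ^ n = ν} := by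
  obtain ⟨a, rfl⟩ := ha.isUnit
  obtain ⟨b, rfl⟩ := hb.isUnit
  have hmaps : Set.MapsTo (fun x ↦ ![a, b] * x ^ r) (torusZeros F) (torusZeros F) := by
    intro x hx
    have hvec (x : Fin 2 → Kˣ) : x = ![x 0, x 1] := by ext i; fin_cases i <;> rfl
    rw [hvec x, ← eval_eq_zero_iff_mem_torusZeros] at hx
    beta_reduce
    rw [hvec (_ * _), ← eval_eq_zero_iff_mem_torusZeros]
    simpa [hf] using hinv _ _ (x 0).ne_zero (x 1).ne_zero hx
  rw [← or_assoc]
  refine (exists_torusZeros_eq_setOf_torusChar_eq hr hrK hF hmaps).imp Fin.exists_fin_two.1 ?_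
  rintro ⟨m, ν, hm, hν, hzeros⟩
  have hchar : IsOfFinOrder (torusChar m ![a, b]) := by
    rw [torusChar_apply, Fin.prod_univ_two]
    exact (Units.isOfFinOrder_val.1 ha).zpow.mul (Units.isOfFinOrder_val.1 hb).zpow
  refine ⟨m 0, m 1, ν, ?_, ?_, ?_⟩
  · simpa [Fin.univ_succ, ← Int.coe_gcd, ← Int.abs_eq_normalize,
      Int.gcd_eq_natAbs_gcd_natAbs, Int.natAbs_abs] using hm
  · exact isOfFinOrder_iff_pow_eq_one.1
      (Units.isOfFinOrder_val.2 (isOfFinOrder_of_mul_pow_eq hr hchar hν))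
  · ext ⟨x, y⟩
    refine and_congr_right fun hx ↦ and_congr_right fun hy ↦ ?_
    lift x to Kˣ using hx.isUnit
    lift y to Kˣ using hy.isUnit
    rw [eval_eq_zero_iff_mem_torusZeros, hzeros, Set.mem_ofPred_eq, torusChar_apply,
      Fin.prod_univ_two, ← Units.val_inj]
    simp

theorem stmt8 (r : ℕ) (hr : 2 ≤ r)
    (F : MvPolynomial (Fin 2) ℂ) (hF : Irreducible F)
    (f : ℂ × ℂ → ℂ × ℂ)
    (hf : (∀ p : ℂ × ℂ, f p = (p.1 ^ r, p.2 ^ r)) ∨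
          (∀ p : ℂ × ℂ, f p = (-p.1 ^ r, -p.2 ^ r)))
    (hinv : ∀ x y : ℂ, x ≠ 0 → y ≠ 0 → eval ![x, y] F = 0 →
      eval ![(f (x, y)).1, (f (x, y)).2] F = 0) :
    (∃ c : ℂ, F = C c * X 0) ∨ (∃ c : ℂ, F = C c * X 1) ∨
      ∃ (m n : ℤ) (ν : ℂ), Int.gcd m n = 1 ∧ (∃ k : ℕ, 0 < k ∧ ν ^ k = 1) ∧
        {p : ℂ × ℂ | p.1 ≠ 0 ∧ p.2 ≠ 0 ∧ eval ![p.1, p.2] F = 0} =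
          {p : ℂ × ℂ | p.1 ≠ 0 ∧ p.2 ≠ 0 ∧ p.1 ^ m * p.2 ^ n = ν} := by
  have hrC : (r : ℂ) ≠ 0 := Nat.cast_ne_zero.2 (by omega)
  have hneg : IsOfFinOrder (-1 : ℂ) := isOfFinOrder_iff_pow_eq_one.2 ⟨2, two_pos, neg_one_sq⟩
  rcases hf with hf | hf
  · exact stmt8_general hr hrC hF .one .one (fun p ↦ by simp [hf]) hinv
  · exact stmt8_general hr hrC hF hneg hneg (fun p ↦ by simp [hf]) hinv
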